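/- arXiv:1903.05323 — 3 statements merged into one kernel-verified Lean document; each statement's English description precedes it below -/
import Mathlib

section
/- (Trudinger–Moser inequality on finite graphs, Theorem 1.3) Let G=(V,E) be a finite graph with symmetric positive edge weights. For every p>2 and every β>1 there exists a constant C>0, depending only on p, β and G, such that for every function u:V→ℝ with ‖u‖_{W^{1,p}(V)} = (∫_V (|∇u|^p + |u|^p) dμ)^{1/p} ≤ 1, one has ∫_V exp(β|u|^{p/(p-1)}) dμ ≤ C·|V|, where |V| = ∫_V 1 dμ = Σ_{x∈V} μ(x) is the volume of G. -/
open Finset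

/-- The vertex measure `μ(x) = Σ_y ω_{xy}` of a weighted finite graph; the weight
`w x y` is `0` when `x` and `y` are not adjacent. -/
noncomputable def graphMu {V : Type*} [Fintype V] (w : V → V → ℝ) (x : V) : ℝ :=
  ∑ y, w x y

/-- The `μ`-Laplacian: `Δu(x) = (1/μ(x)) Σ_{y∼x} ω_{xy} (u(y) - u(x))`. -/
noncomputable def graphLap {V : Type*} [Fintype V] (w : V → V → ℝ) (u : V → ℝ) (x : V) : ℝ :=
  (∑ y, w x y * (u y - u x)) / graphMu w x

/-- The gradient form `Γ(u,v)(x) = (1/2)(Δ(uv)(x) - u(x)Δv(x) - v(x)Δu(x))`. -/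
noncomputable def graphGamma {V : Type*} [Fintype V] (w : V → V → ℝ) (u v : V → ℝ) (x : V) : ℝ :=
  (graphLap w (fun z => u z * v z) x - u x * graphLap w v x - v x * graphLap w u x) / 2

/-- The iterated gradient form
`Γ₂(u,v)(x) = (1/2)(ΔΓ(u,v)(x) - Γ(u,Δv)(x) - Γ(v,Δu)(x))`. -/
noncomputable def graphGamma2 {V : Type*} [Fintype V] (w : V → V → ℝ) (u v : V → ℝ) (x : V) : ℝ :=
  (graphLap w (graphGamma w u v) x - graphGamma w u (graphLap w v) x
    - graphGamma w v (graphLap w u) x) / 2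

/-- The curvature-dimension condition `CD(m, ξ)`:
`Γ₂(u,u)(x) ≥ (1/m)(Δu(x))² + ξ Γ(u,u)(x)` for all `u` and `x`. -/
def graphCD {V : Type*} [Fintype V] (w : V → V → ℝ) (m ξ : ℝ) : Prop :=
  ∀ u : V → ℝ, ∀ x : V,
    graphGamma2 w u u x ≥ (1 / m) * (graphLap w u x) ^ 2 + ξ * graphGamma w u u x

/-- Connectedness of the weighted graph: any two vertices are joined by a path of
edges of positive weight. -/
def graphConnected {V : Type*} [Fintype V] (w : V → V → ℝ) : Prop :=
  ∀ x y : V, Relation.ReflTransGen (fun a b => 0 < w a b) x y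

/-- **Trudinger–Moser inequality on finite graphs** (Theorem 1.3).
For every `p > 2` and `β > 1` there is a constant `C > 0`, depending only on
`p`, `β` and the graph, such that every `u : V → ℝ` with
`‖u‖_{W^{1,p}} = (∫_V (|∇u|^p + |u|^p) dμ)^{1/p} ≤ 1` satisfies
`∫_V exp(β |u|^{p/(p-1)}) dμ ≤ C |V|`. -/
theorem trudinger_moser_finite_graph
    {V : Type*} [Fintype V] [Nonempty V] (w : V → V → ℝ)
    (hsymm : ∀ x y, w x y = w y x) (hnn : ∀ x y, 0 ≤ w x y)
    (hmu : ∀ x, 0 < graphMu w x)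
    (p β : ℝ) (hp : 2 < p) (hβ : 1 < β) :
    ∃ C > (0 : ℝ), ∀ u : V → ℝ,
      (∑ x, graphMu w x *
          ((Real.sqrt ((∑ y, w x y * (u y - u x) ^ 2) / graphMu w x)) ^ p
            + |u x| ^ p)) ^ (1 / p) ≤ 1 →
      ∑ x, graphMu w x * Real.exp (β * |u x| ^ (p / (p - 1)))
        ≤ C * ∑ x, graphMu w x := by
  have hp0 : 0 < p := by linarith
  have hp1 : 0 < p - 1 := by linarith
  refine ⟨Real.exp (β * (∑ x, (graphMu w x)⁻¹) ^ (1 / (p - 1))), Real.exp_pos _, ?_⟩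
  intro u hu
  have hterm : ∀ x, 0 ≤ graphMu w x *
          ((Real.sqrt ((∑ y, w x y * (u y - u x) ^ 2) / graphMu w x)) ^ p
            + |u x| ^ p) := fun x =>
    mul_nonneg (hmu x).le (add_nonneg (Real.rpow_nonneg (Real.sqrt_nonneg _) _)
      (Real.rpow_nonneg (abs_nonneg _) _))
  have hS : (∑ x, graphMu w x *
          ((Real.sqrt ((∑ y, w x y * (u y - u x) ^ 2) / graphMu w x)) ^ p
            + |u x| ^ p)) ≤ 1 := by
    by_contra h
    push Not at h
    exact absurd hu (not_le.mpr (Real.one_lt_rpow h (by positivity)))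
  rw [Finset.mul_sum]
  refine Finset.sum_le_sum fun x _ => ?_
  rw [mul_comm]
  refine mul_le_mul_of_nonneg_right ?_ (hmu x).le
  refine Real.exp_le_exp.mpr (mul_le_mul_of_nonneg_left ?_ (by linarith))
  have hx := (Finset.single_le_sum (fun x _ => hterm x) (Finset.mem_univ x)).trans hS
  have hsq : 0 ≤ (Real.sqrt ((∑ y, w x y * (u y - u x) ^ 2) / graphMu w x)) ^ p :=
    Real.rpow_nonneg (Real.sqrt_nonneg _) _
  have h1 : graphMu w x * |u x| ^ p ≤ 1 := by
    have := mul_nonneg (hmu x).le hsq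
    rw [mul_add] at hx
    linarith
  have h2 : |u x| ^ p ≤ (graphMu w x)⁻¹ := by
    rw [← one_div, le_div_iff₀ (hmu x)]
    linarith
  have h3 : (graphMu w x)⁻¹ ≤ ∑ x, (graphMu w x)⁻¹ :=
    Finset.single_le_sum (f := fun x => (graphMu w x)⁻¹)
      (fun y _ => (inv_pos.mpr (hmu y)).le) (Finset.mem_univ x)
  have h4 : |u x| ^ (p / (p - 1)) = (|u x| ^ p) ^ (1 / (p - 1)) := by
    rw [← Real.rpow_mul (abs_nonneg _), mul_one_div]
  rw [h4]
  exact Real.rpow_le_rpow (Real.rpow_nonneg (abs_nonneg _) _) (h2.trans h3) (by positivity)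
end

section
/- (Theorem 1.4) Let G=(V,E) be a finite connected graph whose μ-Laplacian Δ satisfies the curvature-dimension inequality CD(m,ξ) for some m>1 and ξ>0. Suppose u:V→ℝ is an eigenfunction of −Δ with nonzero eigenvalue λ, i.e. −Δu(x)=λu(x) for all x∈V, u not identically zero, λ≠0. Then λ>ξ and (2λ²/(m(λ−ξ))) ∫_V u² dμ ≤ ∫_V |∇u|² dμ. -/
open Finset

theorem sum_mu_lap {V : Type*} [Fintype V] (w : V → V → ℝ)
    (hsymm : ∀ x y, w x y = w y x) (hmu : ∀ x, 0 < graphMu w x) (f : V → ℝ) :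
    ∑ x, graphMu w x * graphLap w f x = 0 := by
  have h1 : ∀ x, graphMu w x * graphLap w f x = ∑ y, w x y * (f y - f x) := fun x => by
    unfold graphLap
    exact mul_div_cancel₀ _ (hmu x).ne'
  simp_rw [h1]
  have h2 : ∑ x, ∑ y, w x y * (f y - f x) = - ∑ x, ∑ y, w x y * (f y - f x) := by
    conv_lhs => rw [Finset.sum_comm]
    rw [← Finset.sum_neg_distrib]
    refine Finset.sum_congr rfl fun x _ => ?_
    rw [← Finset.sum_neg_distrib]
    refine Finset.sum_congr rfl fun y _ => ?_
    rw [hsymm y x]; ring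
  linarith

theorem gamma_self_nonneg {V : Type*} [Fintype V] (w : V → V → ℝ)
    (hnn : ∀ x y, 0 ≤ w x y) (hmu : ∀ x, 0 < graphMu w x) (u : V → ℝ) (x : V) :
    0 ≤ graphGamma w u u x := by
  have h : graphGamma w u u x = (∑ y, w x y * (u y - u x) ^ 2) / graphMu w x / 2 := by
    unfold graphGamma graphLap
    congr 1
    rw [← mul_div_assoc, ← sub_div, ← sub_div]
    congr 1
    rw [Finset.mul_sum, ← Finset.sum_sub_distrib, ← Finset.sum_sub_distrib]
    exact Finset.sum_congr rfl fun y _ => by ring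
  rw [h]
  have := Finset.sum_nonneg fun y (_ : y ∈ Finset.univ) => mul_nonneg (hnn x y) (sq_nonneg (u y - u x))
  have := hmu x
  positivity

theorem lap_smul {V : Type*} [Fintype V] (w : V → V → ℝ) (c : ℝ) (f : V → ℝ) (x : V) :
    graphLap w (fun z => c * f z) x = c * graphLap w f x := by
  unfold graphLap
  rw [← mul_div_assoc, Finset.mul_sum]
  congr 1
  exact Finset.sum_congr rfl fun y _ => by ring

/-- **Theorem 1.4.** If the μ-Laplacian of a finite connected graph satisfies
`CD(m, ξ)` with `m > 1`, `ξ > 0`, and `u` is an eigenfunction of `-Δ` with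
nonzero eigenvalue `λ`, then `λ > ξ` and
`(2λ²/(m(λ-ξ))) ∫_V u² dμ ≤ ∫_V |∇u|² dμ`, where `|∇u|² = 2Γ(u,u)`. -/
theorem integral_inequality_CD
    {V : Type*} [Fintype V] [Nonempty V] (w : V → V → ℝ)
    (hsymm : ∀ x y, w x y = w y x) (hnn : ∀ x y, 0 ≤ w x y)
    (hmu : ∀ x, 0 < graphMu w x) (hconn : graphConnected w)
    (m ξ lam : ℝ) (hm : 1 < m) (hξ : 0 < ξ) (hCD : graphCD w m ξ)
    (u : V → ℝ) (hu : u ≠ 0) (hlam : lam ≠ 0)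
    (heig : ∀ x, -graphLap w u x = lam * u x) :
    ξ < lam ∧
      (2 * lam ^ 2 / (m * (lam - ξ))) * ∑ x, graphMu w x * (u x) ^ 2
        ≤ ∑ x, graphMu w x * (2 * graphGamma w u u x) := by
  have hL : graphLap w u = fun z => -lam * u z := by
    funext z; linarith [heig z]
  have hΓL : ∀ x, graphGamma w u (graphLap w u) x = -lam * graphGamma w u u x := by
    intro x
    rw [hL]
    unfold graphGamma
    have e : (fun z => u z * (-lam * u z)) = fun z => -lam * (u z * u z) := by
      funext z; ring
    rw [e, lap_smul, lap_smul w (-lam) u]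
    ring
  have hΓ : ∀ x, graphGamma w u u x
      = graphLap w (fun z => u z * u z) x / 2 + lam * (u x) ^ 2 := by
    intro x
    unfold graphGamma
    rw [hL]; ring
  have hI : ∑ x, graphMu w x * graphGamma w u u x = lam * ∑ x, graphMu w x * (u x) ^ 2 := by
    have h0 := sum_mu_lap w hsymm hmu (fun z => u z * u z)
    have : ∑ x, graphMu w x * graphGamma w u u x
        = (∑ x, graphMu w x * graphLap w (fun z => u z * u z) x) / 2
          + lam * ∑ x, graphMu w x * (u x) ^ 2 := by
      rw [Finset.sum_div, Finset.mul_sum, ← Finset.sum_add_distrib]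
      exact Finset.sum_congr rfl fun x _ => by rw [hΓ x]; ring
    rw [this, h0]; ring
  have hI2 : ∑ x, graphMu w x * graphGamma2 w u u x
      = lam * ∑ x, graphMu w x * graphGamma w u u x := by
    have h0 := sum_mu_lap w hsymm hmu (graphGamma w u u)
    have : ∑ x, graphMu w x * graphGamma2 w u u x
        = (∑ x, graphMu w x * graphLap w (graphGamma w u u) x) / 2
          + lam * ∑ x, graphMu w x * graphGamma w u u x := by
      rw [Finset.sum_div, Finset.mul_sum, ← Finset.sum_add_distrib]
      refine Finset.sum_congr rfl fun x _ => ?_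
      unfold graphGamma2
      rw [hΓL x]; ring
    rw [this, h0]; ring
  have hC : (1 / m) * (lam ^ 2 * ∑ x, graphMu w x * (u x) ^ 2)
      + ξ * ∑ x, graphMu w x * graphGamma w u u x
      ≤ ∑ x, graphMu w x * graphGamma2 w u u x := by
    rw [Finset.mul_sum, Finset.mul_sum, Finset.mul_sum, ← Finset.sum_add_distrib]
    refine Finset.sum_le_sum fun x _ => ?_
    have h := mul_le_mul_of_nonneg_left (hCD u x) (hmu x).le
    rw [hL] at h
    refine le_trans (le_of_eq ?_) h
    ring
  have hN : 0 ≤ ∑ x, graphMu w x * graphGamma w u u x :=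
    Finset.sum_nonneg fun x _ => mul_nonneg (hmu x).le (gamma_self_nonneg w hnn hmu u x)
  have hS : 0 < ∑ x, graphMu w x * (u x) ^ 2 := by
    obtain ⟨a, ha⟩ := Function.ne_iff.mp hu
    have ha' : u a ≠ 0 := ha
    refine Finset.sum_pos' (fun x _ => mul_nonneg (hmu x).le (sq_nonneg _)) ⟨a, Finset.mem_univ a, ?_⟩
    have := hmu a
    positivity
  have hG : ∑ x, graphMu w x * (2 * graphGamma w u u x)
      = 2 * ∑ x, graphMu w x * graphGamma w u u x := by
    rw [Finset.mul_sum]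
    exact Finset.sum_congr rfl fun x _ => by ring
  rw [hG]
  rw [hI2, hI] at hC
  rw [hI] at hN ⊢
  generalize (∑ x, graphMu w x * (u x) ^ 2) = S at *
  have hl : 0 < lam := lt_of_le_of_ne (nonneg_of_mul_nonneg_left hN hS) hlam.symm
  have hm0 : 0 < m := by linarith
  have hC2 : lam / m + ξ ≤ lam := by
    have hp : 0 < lam * S := mul_pos hl hS
    refine le_of_mul_le_mul_right ?_ hp
    refine le_trans (le_of_eq ?_) (hC.trans (le_of_eq ?_)) <;> ring
  have hd : 0 < lam / m := by positivity
  have hlt : ξ < lam := by linarith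
  refine ⟨hlt, ?_⟩
  have hs : 0 < lam - ξ := by linarith
  have hk : lam ≤ m * (lam - ξ) := by
    have h3 : lam / m ≤ lam - ξ := by linarith
    rw [div_le_iff₀ hm0] at h3
    linarith
  have : 2 * lam ^ 2 / (m * (lam - ξ)) ≤ 2 * lam := by
    rw [div_le_iff₀ (by positivity)]
    nlinarith
  calc _ ≤ 2 * lam * S := mul_le_mul_of_nonneg_right this hS.le
    _ = _ := by ring
end

section
/- (Lin–Yau curvature bound, cited as proved in [YLS]) Let G=(V,E) be a finite connected graph with symmetric positive edge weights, and set d = max_{x∈V} max_{y∼x} μ(x)/ω_{xy} (which is finite and ≥ 1). Then the μ-Laplacian Δ of G satisfies the curvature-dimension inequality CD(2, 2/d − 1), i.e. Γ₂(u,u)(x) ≥ (1/2)(Δu(x))² + (2/d − 1)Γ(u,u)(x) for every u:V→ℝ and x∈V. -/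
open Finset

theorem graphLap_eq_aux {V : Type*} [Fintype V] (w : V → V → ℝ) (u : V → ℝ) (x : V) :
    graphLap w u x = ∑ y, w x y / graphMu w x * (u y - u x) := by
  unfold graphLap
  rw [Finset.sum_div]
  exact Finset.sum_congr rfl fun y _ => by ring

theorem graphGamma_eq_aux {V : Type*} [Fintype V] (w : V → V → ℝ) (u v : V → ℝ) (x : V) :
    graphGamma w u v x = ∑ y, w x y / graphMu w x * ((u y - u x) * (v y - v x) / 2) := by
  unfold graphGamma
  simp only [graphLap_eq_aux]
  rw [Finset.mul_sum, Finset.mul_sum, ← Finset.sum_sub_distrib, ← Finset.sum_sub_distrib,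
    Finset.sum_div]
  exact Finset.sum_congr rfl fun y _ => by ring

theorem graph_sum_one_aux {V : Type*} [Fintype V] (w : V → V → ℝ) (x : V)
    (hmu : 0 < graphMu w x) : ∑ y, w x y / graphMu w x = 1 := by
  rw [← Finset.sum_div]
  exact div_self hmu.ne'

theorem graph_inner_aux {V : Type*} [Fintype V] (w : V → V → ℝ) (u : V → ℝ) (x y : V)
    (hmu : 0 < graphMu w y) (hnn : ∀ x y, 0 ≤ w x y) :
    2 * (w y x / graphMu w y) * (u y - u x) ^ 2 - (u y - u x) ^ 2 / 2 ≤
      graphGamma w u u y - (u y - u x) * graphLap w u y := by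
  have h1 : ∑ z, w y z / graphMu w y * ((u z - 2 * u y + u x) ^ 2 / 2) =
      graphGamma w u u y - (u y - u x) * graphLap w u y + (u y - u x) ^ 2 / 2 := by
    have h2 : (u y - u x) ^ 2 / 2 = ∑ z, w y z / graphMu w y * ((u y - u x) ^ 2 / 2) := by
      rw [← Finset.sum_mul, graph_sum_one_aux w y hmu, one_mul]
    rw [h2, graphGamma_eq_aux, graphLap_eq_aux, Finset.mul_sum, ← Finset.sum_sub_distrib,
      ← Finset.sum_add_distrib]
    exact Finset.sum_congr rfl fun z _ => by ring
  have h3 : w y x / graphMu w y * ((u x - 2 * u y + u x) ^ 2 / 2) ≤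
      ∑ z, w y z / graphMu w y * ((u z - 2 * u y + u x) ^ 2 / 2) :=
    Finset.single_le_sum (f := fun z => w y z / graphMu w y * ((u z - 2 * u y + u x) ^ 2 / 2))
      (fun z _ => mul_nonneg (div_nonneg (hnn y z) hmu.le) (by positivity)) (Finset.mem_univ x)
  rw [h1] at h3
  linarith

/-- **Lin–Yau curvature bound.** Let `d = max_{x∈V} max_{y∼x} μ(x)/ω_{xy}`
(the maximum of the set `{μ(x)/ω_{xy} : x ∼ y}`). Then the μ-Laplacian
satisfies `CD(2, 2/d - 1)`. -/
theorem lin_yau_curvature_bound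
    {V : Type*} [Fintype V] [Nonempty V] (w : V → V → ℝ)
    (hsymm : ∀ x y, w x y = w y x) (hnn : ∀ x y, 0 ≤ w x y)
    (hmu : ∀ x, 0 < graphMu w x) (hconn : graphConnected w)
    (d : ℝ)
    (hd : IsGreatest {r : ℝ | ∃ x y, 0 < w x y ∧ r = graphMu w x / w x y} d) :
    graphCD w 2 (2 / d - 1) := by
  intro u x
  have hlow : ∀ y, w x y / graphMu w x * ((2 / d - 1 / 2) * (u y - u x) ^ 2) ≤
      w x y / graphMu w x * (graphGamma w u u y - (u y - u x) * graphLap w u y) := by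
    intro y
    rcases (hnn x y).eq_or_lt with h0 | hpos
    · simp [← h0]
    · refine mul_le_mul_of_nonneg_left ?_ (div_nonneg (hnn x y) (hmu x).le)
      refine le_trans ?_ (graph_inner_aux w u x y (hmu y) hnn)
      have hyx : 0 < w y x := by rw [← hsymm x y]; exact hpos
      have hle : graphMu w y / w y x ≤ d := hd.2 ⟨y, x, hyx, rfl⟩
      have h1 : 1 / d ≤ w y x / graphMu w y := by
        have := one_div_le_one_div_of_le (div_pos (hmu y) hyx) hle
        rwa [one_div_div] at this
      have h2 := mul_le_mul_of_nonneg_right h1 (sq_nonneg (u y - u x))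
      have h3 : (2 / d - 1 / 2) * (u y - u x) ^ 2 =
        2 * (1 / d * (u y - u x) ^ 2) - (u y - u x) ^ 2 / 2 := by ring
      rw [h3]
      linarith
  have hsum := Finset.sum_le_sum fun y (_ : y ∈ Finset.univ) => hlow y
  have hL : ∑ y, w x y / graphMu w x * ((2 / d - 1 / 2) * (u y - u x) ^ 2) =
      (4 / d - 1) * graphGamma w u u x := by
    rw [graphGamma_eq_aux, Finset.mul_sum]
    exact Finset.sum_congr rfl fun y _ => by ring
  have hR : ∑ y, w x y / graphMu w x * (graphGamma w u u y - (u y - u x) * graphLap w u y) =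
      2 * graphGamma2 w u u x + graphGamma w u u x - graphLap w u x ^ 2 := by
    have e1 : graphLap w (graphGamma w u u) x =
        ∑ y, w x y / graphMu w x * graphGamma w u u y - graphGamma w u u x := by
      rw [graphLap_eq_aux]
      simp only [mul_sub]
      rw [Finset.sum_sub_distrib, ← Finset.sum_mul, graph_sum_one_aux w x (hmu x), one_mul]
    have e2 : 2 * graphGamma w u (graphLap w u) x =
        ∑ y, w x y / graphMu w x * ((u y - u x) * graphLap w u y) - graphLap w u x ^ 2 := by
      have e3 : graphLap w u x ^ 2 =
          ∑ y, w x y / graphMu w x * (u y - u x) * graphLap w u x := by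
        rw [← Finset.sum_mul, ← graphLap_eq_aux, sq]
      rw [e3, graphGamma_eq_aux, Finset.mul_sum, ← Finset.sum_sub_distrib]
      exact Finset.sum_congr rfl fun y _ => by ring
    have e4 : ∑ y, w x y / graphMu w x * (graphGamma w u u y - (u y - u x) * graphLap w u y) =
        ∑ y, w x y / graphMu w x * graphGamma w u u y -
        ∑ y, w x y / graphMu w x * ((u y - u x) * graphLap w u y) := by
      rw [← Finset.sum_sub_distrib]
      exact Finset.sum_congr rfl fun y _ => by ring
    have e5 : 2 * graphGamma2 w u u x = graphLap w (graphGamma w u u) x -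
        2 * graphGamma w u (graphLap w u) x := by
      unfold graphGamma2; ring
    linarith
  rw [hL, hR] at hsum
  have h6 : (4 / d - 1) * graphGamma w u u x =
    2 * ((2 / d - 1) * graphGamma w u u x) + graphGamma w u u x := by ring
  linarith
end
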